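/- arXiv:1203.5965 — 4 statements merged into one kernel-verified Lean document; each statement's English description precedes it below -/
import Mathlib

section
/- Let K be a field and q ∈ K with q ≠ 0 and q² ≠ 1. Let A be an associative K-algebra, let e₁, e₂, f₁, f₂ ∈ A, and let K₁, K₂ ∈ A be invertible elements such that K₁*K₂ = K₂*K₁, e₁*f₁ − f₁*e₁ = (K₁ − K₁⁻¹)/(q − q⁻¹), e₂*f₂ − f₂*e₂ = (K₂ − K₂⁻¹)/(q − q⁻¹), e₁*f₂ = f₂*e₁, e₂*f₁ = f₁*e₂, K₁*e₂ = q⁻¹·e₂*K₁, K₂*e₁ = q⁻¹·e₁*K₂, K₁*f₂ = q·f₂*K₁, and K₂*f₁ = q·f₁*K₂. Then the elements E := [e₁, e₂]_q and F := [f₂, f₁]_{q⁻¹} satisfy E*F − F*E = (K₁*K₂ − (K₁*K₂)⁻¹)/(q − q⁻¹). -/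
/-!
Commutation with a fixed element is a derivation of every twisted commutator. Since `e₁` commutes
with `f₂` and `e₂` with `f₁`, this gives `⁅E, f₂⁆ = [e₁, ⁅e₂, f₂⁆]_q` and
`⁅E, f₁⁆ = [⁅e₁, f₁⁆, e₂]_q`. In each of these one of the two terms coming from `K - K⁻¹`
vanishes, leaving `q • e₁ K₂⁻¹` and `-e₂ K₁`. A second application of the derivation rule yields
`⁅E, F⁆ = ⁅e₁, f₁⁆ K₂⁻¹ + ⁅e₂, f₂⁆ K₁`, where the mixed terms `K₁ K₂⁻¹` cancel.
-/

/-- The `a`-commutator `[x, y]_a = x*y - a • (y*x)` in a `K`-algebra. -/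
def qComm {K : Type*} [Field K] {A : Type*} [Ring A] [Algebra K A]
    (a : K) (x y : A) : A := x * y - a • (y * x)

section TwistedCommutator

variable {R A : Type*} [CommRing R] [Ring A] [Algebra R A]

/-- The `a`-commutator `[x, y]_a` of an algebra over a commutative ring, bundled as a bilinear map
in `x` and `y`; over a field its values are those of `qComm` by definition. -/
def twistedCommutator (a : R) : A →ₗ[R] A →ₗ[R] A :=
  LinearMap.mul R A - a • (LinearMap.mul R A).flip

lemma twistedCommutator_apply (a : R) (x y : A) :
    twistedCommutator a x y = x * y - a • (y * x) := rfl

lemma lie_twistedCommutator (a : R) (x y z : A) :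
    ⁅z, twistedCommutator a x y⁆ =
      twistedCommutator a ⁅z, x⁆ y + twistedCommutator a x ⁅z, y⁆ := by
  simp only [twistedCommutator_apply, Ring.lie_def, mul_sub, sub_mul, smul_mul_assoc,
    mul_smul_comm, mul_assoc]
  module

lemma twistedCommutator_lie (a : R) (x y z : A) :
    ⁅twistedCommutator a x y, z⁆ =
      twistedCommutator a ⁅x, z⁆ y + twistedCommutator a x ⁅y, z⁆ := by
  simp only [twistedCommutator_apply, Ring.lie_def, mul_sub, sub_mul, smul_mul_assoc,
    mul_smul_comm, mul_assoc]
  module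

lemma twistedCommutator_mul_left {a : R} {v y : A} (h : v * y = a • (y * v)) (x : A) :
    twistedCommutator a (x * v) y = a • (⁅x, y⁆ * v) := by
  rw [twistedCommutator_apply, mul_assoc, h, mul_smul_comm, ← smul_sub, ← mul_assoc, ← mul_assoc,
    ← sub_mul, Ring.lie_def]

lemma twistedCommutator_inv_mul_right {q : Rˣ} {v y : A} (h : v * y = (q : R) • (y * v)) (x : A) :
    twistedCommutator (↑q⁻¹ : R) y (x * v) = -(⁅x, y⁆ * v) := by
  rw [twistedCommutator_apply, mul_assoc x, h, mul_smul_comm, smul_smul, Units.inv_mul, one_smul,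
    ← mul_assoc, ← mul_assoc, ← sub_mul, ← neg_mul, Ring.lie_def, neg_sub]

lemma units_inv_mul_eq_smul {q : Rˣ} {u : Aˣ} {x : A} (h : (u : A) * x = (q : R) • (x * u)) :
    (↑u⁻¹ : A) * x = (↑q⁻¹ : R) • (x * ↑u⁻¹) := by
  rw [Units.inv_mul_eq_iff_eq_mul, mul_smul_comm, ← mul_assoc, h, smul_mul_assoc,
    Units.mul_inv_cancel_right, smul_smul, Units.inv_mul, one_smul]

section CartanElement

variable {q : Rˣ} {h x : A} {u : Aˣ}

lemma twistedCommutator_right_of_smul_eq_sub_inv (hq : IsSMulRegular A ((q : R) - ↑q⁻¹))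
    (hu : ((q : R) - ↑q⁻¹) • h = u - ↑u⁻¹) (hux : (u : A) * x = (↑q⁻¹ : R) • (x * u)) :
    twistedCommutator (q : R) x h = (q : R) • (x * ↑u⁻¹) := by
  have hux' : (↑u⁻¹ : A) * x = (q : R) • (x * ↑u⁻¹) := inv_inv q ▸ units_inv_mul_eq_smul hux
  have h_unit : twistedCommutator (q : R) x u = 0 := by
    rw [twistedCommutator_apply, hux, smul_smul, Units.mul_inv, one_smul, sub_self]
  have h_inv : twistedCommutator (q : R) x ↑u⁻¹ =
      -(((q : R) - ↑q⁻¹) • (q : R) • (x * ↑u⁻¹)) := by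
    rw [twistedCommutator_apply, hux', sub_smul, smul_smul (↑q⁻¹ : R), Units.inv_mul, one_smul,
      neg_sub]
  refine hq ?_
  calc ((q : R) - ↑q⁻¹) • twistedCommutator (q : R) x h
      = twistedCommutator (q : R) x (u - ↑u⁻¹) := by rw [← map_smul, hu]
    _ = ((q : R) - ↑q⁻¹) • (q : R) • (x * ↑u⁻¹) := by
      rw [map_sub, h_unit, h_inv, zero_sub, neg_neg]

lemma twistedCommutator_left_of_smul_eq_sub_inv (hq : IsSMulRegular A ((q : R) - ↑q⁻¹))
    (hu : ((q : R) - ↑q⁻¹) • h = u - ↑u⁻¹) (hux : (u : A) * x = (↑q⁻¹ : R) • (x * u)) :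
    twistedCommutator (q : R) h x = -(x * u) := by
  have hux' : (↑u⁻¹ : A) * x = (q : R) • (x * ↑u⁻¹) := inv_inv q ▸ units_inv_mul_eq_smul hux
  have h_unit : twistedCommutator (q : R) (u : A) x = ((q : R) - ↑q⁻¹) • -(x * u) := by
    rw [twistedCommutator_apply, hux, ← sub_smul, smul_neg, ← neg_smul, neg_sub]
  have h_inv : twistedCommutator (q : R) (↑u⁻¹ : A) x = 0 := by
    rw [twistedCommutator_apply, hux', sub_self]
  refine hq ?_
  calc ((q : R) - ↑q⁻¹) • twistedCommutator (q : R) h x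
      = twistedCommutator (q : R) (↑u - ↑u⁻¹ : A) x := by rw [← LinearMap.map_smul₂, hu]
    _ = ((q : R) - ↑q⁻¹) • -(x * u) := by rw [LinearMap.map_sub₂, h_unit, h_inv, sub_zero]

end CartanElement

theorem composite_root_ef_commutator_general {q : Rˣ} (hq : IsSMulRegular A ((q : R) - ↑q⁻¹))
    {e₁ e₂ f₁ f₂ : A} {K₁ K₂ : Aˣ} (hK : Commute (K₁ : A) K₂)
    (hef₁ : ((q : R) - ↑q⁻¹) • ⁅e₁, f₁⁆ = K₁ - ↑K₁⁻¹)
    (hef₂ : ((q : R) - ↑q⁻¹) • ⁅e₂, f₂⁆ = K₂ - ↑K₂⁻¹)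
    (he₁f₂ : Commute e₁ f₂) (he₂f₁ : Commute e₂ f₁)
    (hK₁e₂ : (K₁ : A) * e₂ = (↑q⁻¹ : R) • (e₂ * K₁))
    (hK₂e₁ : (K₂ : A) * e₁ = (↑q⁻¹ : R) • (e₁ * K₂))
    (hK₁f₂ : (K₁ : A) * f₂ = (q : R) • (f₂ * K₁))
    (hK₂f₁ : (K₂ : A) * f₁ = (q : R) • (f₁ * K₂)) :
    ((q : R) - ↑q⁻¹) • ⁅twistedCommutator (q : R) e₁ e₂, twistedCommutator (↑q⁻¹ : R) f₂ f₁⁆ =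
      ↑(K₁ * K₂) - ↑(K₁ * K₂)⁻¹ := by
  set E := twistedCommutator (q : R) e₁ e₂
  have hEf₂ : ⁅E, f₂⁆ = (q : R) • (e₁ * ↑K₂⁻¹) := by
    rw [twistedCommutator_lie, he₁f₂.lie_eq, LinearMap.map_zero₂, zero_add,
      twistedCommutator_right_of_smul_eq_sub_inv hq hef₂ hK₂e₁]
  have hEf₁ : ⁅E, f₁⁆ = -(e₂ * K₁) := by
    rw [twistedCommutator_lie, he₂f₁.lie_eq, map_zero, add_zero,
      twistedCommutator_left_of_smul_eq_sub_inv hq hef₁ hK₁e₂]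
  have hEF : ⁅E, twistedCommutator (↑q⁻¹ : R) f₂ f₁⁆ = ⁅e₁, f₁⁆ * ↑K₂⁻¹ + ⁅e₂, f₂⁆ * K₁ := by
    rw [lie_twistedCommutator, hEf₂, hEf₁, LinearMap.map_smul₂,
      twistedCommutator_mul_left (units_inv_mul_eq_smul hK₂f₁), smul_smul, Units.mul_inv, one_smul,
      map_neg, twistedCommutator_inv_mul_right hK₁f₂, neg_neg]
  have hK_inv : (K₁ : A) * ↑K₂⁻¹ = ↑K₂⁻¹ * K₁ := hK.units_inv_right
  have hinv_mul : (↑(K₁ * K₂)⁻¹ : A) = ↑K₁⁻¹ * ↑K₂⁻¹ := by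
    rw [show K₁ * K₂ = K₂ * K₁ from Units.ext hK, mul_inv_rev, Units.val_mul]
  calc ((q : R) - ↑q⁻¹) • ⁅E, twistedCommutator (↑q⁻¹ : R) f₂ f₁⁆
      = (K₁ - ↑K₁⁻¹) * ↑K₂⁻¹ + (K₂ - ↑K₂⁻¹) * K₁ := by
        rw [hEF, smul_add, ← smul_mul_assoc, ← smul_mul_assoc, hef₁, hef₂]
    _ = K₁ * K₂ - ↑K₁⁻¹ * ↑K₂⁻¹ := by
        rw [sub_mul, sub_mul, hK_inv, hK.eq]
        abel
    _ = ↑(K₁ * K₂) - ↑(K₁ * K₂)⁻¹ := by rw [Units.val_mul, hinv_mul]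

end TwistedCommutator

/-- `[e_γ, f_γ] = (q^{h_γ} - q^{-h_γ})/(q - q⁻¹)` for a composite root `γ = α + μ`:
with `E = [e₁,e₂]_q` and `F = [f₂,f₁]_{q⁻¹}` one has
`E*F - F*E = (K₁K₂ - (K₁K₂)⁻¹)/(q - q⁻¹)`. -/
theorem composite_root_ef_commutator {K : Type*} [Field K] (q : K) (hq : q ≠ 0)
    (hq2 : q ^ 2 ≠ 1) {A : Type*} [Ring A] [Algebra K A]
    (e₁ e₂ f₁ f₂ : A) (K₁ K₂ : Aˣ)
    (hK : (K₁ : A) * (K₂ : A) = (K₂ : A) * (K₁ : A))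
    (h1 : e₁ * f₁ - f₁ * e₁ = (q - q⁻¹)⁻¹ • ((K₁ : A) - ((K₁⁻¹ : Aˣ) : A)))
    (h2 : e₂ * f₂ - f₂ * e₂ = (q - q⁻¹)⁻¹ • ((K₂ : A) - ((K₂⁻¹ : Aˣ) : A)))
    (h3 : e₁ * f₂ = f₂ * e₁) (h4 : e₂ * f₁ = f₁ * e₂)
    (h5 : (K₁ : A) * e₂ = q⁻¹ • (e₂ * (K₁ : A)))
    (h6 : (K₂ : A) * e₁ = q⁻¹ • (e₁ * (K₂ : A)))
    (h7 : (K₁ : A) * f₂ = q • (f₂ * (K₁ : A)))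
    (h8 : (K₂ : A) * f₁ = q • (f₁ * (K₂ : A))) :
    qComm q e₁ e₂ * qComm q⁻¹ f₂ f₁ - qComm q⁻¹ f₂ f₁ * qComm q e₁ e₂ =
      (q - q⁻¹)⁻¹ • (((K₁ * K₂ : Aˣ) : A) - (((K₁ * K₂)⁻¹ : Aˣ) : A)) := by
  have hδ : q - q⁻¹ ≠ 0 := by
    rwa [sub_ne_zero, Ne, ← mul_eq_one_iff_eq_inv₀ hq, ← sq]
  rw [eq_inv_smul_iff₀ hδ] at h1 h2 ⊢
  exact composite_root_ef_commutator_general (q := Units.mk0 q hq)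
    (.of_ne_zero hδ) hK h1 h2 h3 h4 h5 h6 h7 h8
end

section
/- Let K be a field and q ∈ K with q ≠ 0 and q² ≠ 1. Let A be an associative K-algebra, let e, f, g ∈ A, and let H ∈ A be invertible, satisfying e*f − f*e = (H − H⁻¹)/(q − q⁻¹), e*g = g*e, and H*g = q·g*H. Then e*[g, f]_{q⁻¹} − [g, f]_{q⁻¹}*e = −q⁻¹·g*H⁻¹. -/
/-!
Since `⁅e, ·⁆` is a derivation of `[·, ·]_{q⁻¹}` and `e` commutes with `g`, we have
`⁅e, [g, f]_{q⁻¹}⁆ = [g, ⁅e, f⁆]_{q⁻¹}`. Here `⁅e, f⁆` is a multiple of `H - H⁻¹`; as `H` and `H⁻¹`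
`q`-commute with `g` with inverse factors `q` and `q⁻¹`, the `q⁻¹`-commutator with `g` kills `H` and
multiplies `g * H⁻¹` by `1 - q⁻²`.
-/

section qComm

variable {K : Type*} [Field K] {A : Type*} [Ring A] [Algebra K A]

theorem qComm_zero_left (a : K) (y : A) : qComm a 0 y = 0 := by
  rw [qComm, zero_mul, mul_zero, smul_zero, sub_zero]

theorem qComm_sub_right (a : K) (x y z : A) :
    qComm a x (y - z) = qComm a x y - qComm a x z := by
  simp only [qComm, mul_sub, sub_mul, smul_sub]
  abel

theorem qComm_smul_right (a c : K) (x y : A) : qComm a x (c • y) = c • qComm a x y := by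
  simp only [qComm, mul_smul_comm, smul_mul_assoc, smul_sub, smul_comm a c]

theorem lie_qComm (a : K) (e x y : A) :
    ⁅e, qComm a x y⁆ = qComm a ⁅e, x⁆ y + qComm a x ⁅e, y⁆ := by
  simp only [qComm, Ring.lie_def, mul_sub, sub_mul, mul_smul_comm, smul_mul_assoc, smul_sub,
    mul_assoc]
  abel

theorem lie_qComm_of_commute (a : K) {e x : A} (h : Commute e x) (y : A) :
    ⁅e, qComm a x y⁆ = qComm a x ⁅e, y⁆ := by
  rw [lie_qComm, commute_iff_lie_eq.mp h, qComm_zero_left, zero_add]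

theorem qComm_of_mul_eq_smul_mul (a : K) {b : K} {x y : A} (h : y * x = b • (x * y)) :
    qComm a x y = (1 - a * b) • (x * y) := by
  rw [qComm, h, smul_smul, sub_smul, one_smul]

end qComm

theorem units_inv_mul_eq_inv_smul_mul {G₀ M : Type*} [GroupWithZero G₀] [Monoid M]
    [MulAction G₀ M] [IsScalarTower G₀ M M] [SMulCommClass G₀ M M] {c : G₀} (hc : c ≠ 0)
    {u : Mˣ} {x : M} (h : u * x = c • (x * u)) :
    ↑u⁻¹ * x = c⁻¹ • (x * ↑u⁻¹) := by
  rw [Units.inv_mul_eq_iff_eq_mul, mul_smul_comm, ← mul_assoc, h, smul_mul_assoc,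
    inv_smul_smul₀ hc, Units.mul_inv_cancel_right]

theorem sub_inv_ne_zero_of_sq_ne_one {D : Type*} [DivisionRing D] {q : D} (hq : q ≠ 0)
    (hq2 : q ^ 2 ≠ 1) : q - q⁻¹ ≠ 0 := by
  rwa [sub_ne_zero, Ne, ← mul_eq_one_iff_eq_inv₀ hq, ← sq]

theorem inv_sub_inv_mul_one_sub {D : Type*} [DivisionRing D] {q : D} (hq : q ≠ 0)
    (hq2 : q ^ 2 ≠ 1) : (q - q⁻¹)⁻¹ * (1 - q⁻¹ * q⁻¹) = q⁻¹ := by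
  have factor : 1 - q⁻¹ * q⁻¹ = (q - q⁻¹) * q⁻¹ := by rw [sub_mul, mul_inv_cancel₀ hq]
  rw [factor, inv_mul_cancel_left₀ (sub_inv_ne_zero_of_sq_ne_one hq hq2)]

/-- Abstract form of `[e_μ, f_{μ+γ}] = -q⁻¹ f_γ q^{-h_μ}`:
`e*[g,f]_{q⁻¹} - [g,f]_{q⁻¹}*e = -q⁻¹ • (g*H⁻¹)`. -/
theorem e_comm_gf {K : Type*} [Field K] (q : K) (hq : q ≠ 0) (hq2 : q ^ 2 ≠ 1)
    {A : Type*} [Ring A] [Algebra K A] (e f g : A) (H : Aˣ)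
    (hef : e * f - f * e = (q - q⁻¹)⁻¹ • ((H : A) - ((H⁻¹ : Aˣ) : A)))
    (heg : e * g = g * e)
    (hHg : (H : A) * g = q • (g * (H : A))) :
    e * qComm q⁻¹ g f - qComm q⁻¹ g f * e = -q⁻¹ • (g * ((H⁻¹ : Aˣ) : A)) := by
  have qComm_H : qComm q⁻¹ g (H : A) = 0 := by
    rw [qComm_of_mul_eq_smul_mul q⁻¹ hHg, inv_mul_cancel₀ hq, sub_self, zero_smul]
  have qComm_H_inv : qComm q⁻¹ g ((H⁻¹ : Aˣ) : A) = (1 - q⁻¹ * q⁻¹) • (g * ((H⁻¹ : Aˣ) : A)) :=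
    qComm_of_mul_eq_smul_mul q⁻¹ (units_inv_mul_eq_inv_smul_mul hq hHg)
  calc e * qComm q⁻¹ g f - qComm q⁻¹ g f * e
      = qComm q⁻¹ g (e * f - f * e) := lie_qComm_of_commute q⁻¹ heg f
    _ = (q - q⁻¹)⁻¹ • (qComm q⁻¹ g (H : A) - qComm q⁻¹ g ((H⁻¹ : Aˣ) : A)) := by
      rw [hef, qComm_smul_right, qComm_sub_right]
    _ = -q⁻¹ • (g * ((H⁻¹ : Aˣ) : A)) := by
      rw [qComm_H, qComm_H_inv, zero_sub, smul_neg, smul_smul, inv_sub_inv_mul_one_sub hq hq2,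
        neg_smul]
end

section
/- Let K be a field and q ∈ K with q ≠ 0 and q² ≠ 1. Let A be an associative K-algebra, let e, f, g ∈ A, and let H ∈ A be invertible, satisfying e*f − f*e = (H − H⁻¹)/(q − q⁻¹), e*g = g*e, and H*g = q·g*H. Then e*[f, g]_{q⁻¹} − [f, g]_{q⁻¹}*e = g*H. -/
/-!
The commutator with `e` is a derivation for `[·, ·]_a`, and it kills `g`, so
`[e, [f, g]_{q⁻¹}] = [[e, f], g]_{q⁻¹}`, where `[e, f]` is a multiple of `H - H⁻¹`. Since
`[H, g]_q = 0`, changing the parameter from `q` to `q⁻¹` leaves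
`[H, g]_{q⁻¹} = (q - q⁻¹) • (g * H)`. Multiplying the same relation by `H⁻¹` on both sides gives
`[g, H⁻¹]_q = 0`, that is, `[H⁻¹, g]_{q⁻¹} = 0`.
-/

section qComm

variable {K : Type*} [Field K] {A : Type*} [Ring A] [Algebra K A]

theorem qComm_eq_zero_iff {a : K} {x y : A} : qComm a x y = 0 ↔ x * y = a • (y * x) :=
  sub_eq_zero

theorem qComm_zero_right (a : K) (x : A) : qComm a x 0 = 0 := by
  simp [qComm]

theorem qComm_sub_left (a : K) (x x' y : A) :
    qComm a (x - x') y = qComm a x y - qComm a x' y := by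
  simp only [qComm, sub_mul, mul_sub, smul_sub]
  abel

theorem qComm_smul_left (a c : K) (x y : A) : qComm a (c • x) y = c • qComm a x y := by
  simp only [qComm, smul_mul_assoc, mul_smul_comm, smul_sub, smul_comm c a]

theorem qComm_inv_swap {a : K} (ha : a ≠ 0) (x y : A) :
    qComm a⁻¹ y x = -(a⁻¹ • qComm a x y) := by
  simp only [qComm, smul_sub, inv_smul_smul₀ ha, neg_sub]

theorem qComm_eq_qComm_add_smul (a b : K) (x y : A) :
    qComm b x y = qComm a x y + (a - b) • (y * x) := by
  simp only [qComm, sub_smul]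
  abel

theorem lie_qComm_of_commute_right (a : K) {e y : A} (h : Commute e y) (x : A) :
    ⁅e, qComm a x y⁆ = qComm a ⁅e, x⁆ y := by
  rw [lie_qComm, h.lie_eq, qComm_zero_right, add_zero]

theorem qComm_units_inv_right_eq_zero {a : K} {u : Aˣ} {x : A} (h : qComm a (u : A) x = 0) :
    qComm a x (↑u⁻¹ : A) = 0 := by
  have hux : SemiconjBy (u : A) x (a • x) := by
    rw [SemiconjBy, smul_mul_assoc, qComm_eq_zero_iff.mp h]
  rw [qComm_eq_zero_iff, ← mul_smul_comm]
  exact hux.units_inv_symm_left.eq.symm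

theorem qComm_inv_units_sub_inv {a : K} (ha : a ≠ 0) {u : Aˣ} {x : A}
    (h : qComm a (u : A) x = 0) :
    qComm a⁻¹ ((u : A) - ↑u⁻¹) x = (a - a⁻¹) • (x * u) := by
  have hu : qComm a⁻¹ (u : A) x = (a - a⁻¹) • (x * u) := by
    rw [qComm_eq_qComm_add_smul a, h, zero_add]
  have hu_inv : qComm a⁻¹ (↑u⁻¹ : A) x = 0 := by
    rw [qComm_inv_swap ha, qComm_units_inv_right_eq_zero h, smul_zero, neg_zero]
  rw [qComm_sub_left, hu, hu_inv, sub_zero]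

end qComm

/-- Abstract form of `[e_γ, f_{μ+γ}] = f_μ q^{h_γ}`:
`e*[f,g]_{q⁻¹} - [f,g]_{q⁻¹}*e = g*H`. -/
theorem e_comm_fg {K : Type*} [Field K] (q : K) (hq : q ≠ 0) (hq2 : q ^ 2 ≠ 1)
    {A : Type*} [Ring A] [Algebra K A] (e f g : A) (H : Aˣ)
    (hef : e * f - f * e = (q - q⁻¹)⁻¹ • ((H : A) - ((H⁻¹ : Aˣ) : A)))
    (heg : e * g = g * e)
    (hHg : (H : A) * g = q • (g * (H : A))) :
    e * qComm q⁻¹ f g - qComm q⁻¹ f g * e = g * (H : A) := by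
  have hq_sub : q - q⁻¹ ≠ 0 := by
    rwa [sub_ne_zero, Ne, ← mul_eq_one_iff_eq_inv₀ hq, ← sq]
  calc e * qComm q⁻¹ f g - qComm q⁻¹ f g * e
      = qComm q⁻¹ ⁅e, f⁆ g := lie_qComm_of_commute_right q⁻¹ heg f
    _ = (q - q⁻¹)⁻¹ • qComm q⁻¹ ((H : A) - ↑H⁻¹) g := by
        rw [Ring.lie_def, hef, qComm_smul_left]
    _ = g * H := by
        rw [qComm_inv_units_sub_inv hq (qComm_eq_zero_iff.mpr hHg), inv_smul_smul₀ hq_sub]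
end

section
/- Let K be a field, m a positive integer, and a₁, …, a_m ∈ K pairwise distinct elements. Then for every natural number k: ∑_{(k₁,…,k_m)∈ℕ^m, k₁+⋯+k_m = k} a₁^{k₁}·a₂^{k₂}·⋯·a_m^{k_m} = ∑_{i=1}^{m} a_i^{k+m−1} / ∏_{j≠i} (a_i − a_j). -/
open Finset

/-!
Write `h_k(s)` for the complete homogeneous polynomial in the variables `v j`, `j ∈ s`, and `f[s]`
for the divided difference of `f` at the nodes `v j`, `j ∈ s`. The right-hand side is
`(x ^ (k + #s - 1))[s]`, and both sides satisfy the same recurrence when a node `v i` is added: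
separating the monomials without `v i` from the multiples of `v i` gives
`h_{k+1}(s ∪ {i}) = h_{k+1}(s) + v i * h_k(s ∪ {i})`, while `((x - v i) f)[s ∪ {i}] = f[s]` gives
`(x ^ (n + 1))[s ∪ {i}] = (x ^ n)[s] + v i * (x ^ n)[s ∪ {i}]`. At `k = 0` both sides are `1`,
because the divided difference at `#s` nodes reads off the coefficient of `x ^ (#s - 1)`.
-/

section CompleteHomogeneous

variable {ι R : Type*} [DecidableEq ι] [CommSemiring R]

/-- The complete homogeneous symmetric polynomial of degree `k` in the variables indexed by `s`,
evaluated at `v`. The exponent vectors are functions on all of `ι` that vanish outside `s`. -/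
def completeHomogeneous (s : Finset ι) (v : ι → R) (k : ℕ) : R :=
  ∑ f ∈ piAntidiag s k, ∏ j ∈ s, v j ^ f j

lemma completeHomogeneous_zero (s : Finset ι) (v : ι → R) : completeHomogeneous s v 0 = 1 := by
  simp [completeHomogeneous]

lemma completeHomogeneous_empty_succ (v : ι → R) (k : ℕ) :
    completeHomogeneous ∅ v (k + 1) = 0 := by
  simp [completeHomogeneous]

lemma completeHomogeneous_insert {s : Finset ι} {i : ι} (hi : i ∉ s) (v : ι → R) (k : ℕ) :
    completeHomogeneous (insert i s) v k =
      ∑ p ∈ antidiagonal k, v i ^ p.1 * completeHomogeneous s v p.2 := by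
  simp only [completeHomogeneous, ← cons_eq_insert i s hi, piAntidiag_cons, sum_disjiUnion,
    sum_map, mul_sum]
  refine sum_congr rfl fun p _ ↦ sum_congr rfl fun f hf ↦ ?_
  have hfi : f i = 0 := by
    by_contra h
    exact hi ((mem_piAntidiag.1 hf).2 i h)
  have hne : ∀ j ∈ s, j ≠ i := fun j hj ↦ ne_of_mem_of_not_mem hj hi
  rw [prod_cons]
  congr 1
  · simp [hfi]
  · exact prod_congr rfl fun j hj ↦ by simp [hne j hj]

lemma completeHomogeneous_insert_succ {s : Finset ι} {i : ι} (hi : i ∉ s) (v : ι → R) (k : ℕ) :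
    completeHomogeneous (insert i s) v (k + 1) =
      completeHomogeneous s v (k + 1) + v i * completeHomogeneous (insert i s) v k := by
  simp only [completeHomogeneous_insert hi, Nat.sum_antidiagonal_succ, pow_zero, one_mul, pow_succ',
    mul_assoc, mul_sum]

end CompleteHomogeneous

section DividedDifference

variable {ι K : Type*} [DecidableEq ι] [Field K] {s : Finset ι} {v : ι → K}

/-- The divided difference of `f` at the nodes `v j`, `j ∈ s`, in Lagrange form. It has its usual
meaning only when `v` is injective on `s`, since otherwise some denominators vanish. -/
def dividedDifference (s : Finset ι) (v : ι → K) (f : K → K) : K :=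
  ∑ i ∈ s, f (v i) / ∏ j ∈ s.erase i, (v i - v j)

lemma dividedDifference_pow_card_sub_one (hs : s.Nonempty) (hv : Set.InjOn v s) :
    dividedDifference s v (· ^ (#s - 1)) = 1 := by
  have hdeg : (#s : WithBot ℕ) = (Polynomial.X ^ (#s - 1) : Polynomial K).degree + 1 := by
    rw [Polynomial.degree_X_pow]
    exact_mod_cast (Nat.sub_add_cancel hs.card_pos).symm
  simpa [dividedDifference] using (Lagrange.leadingCoeff_eq_sum hv hdeg).symm

lemma dividedDifference_insert_sub_mul {i : ι} (hi : i ∉ s) (hv : ∀ j ∈ s, v j ≠ v i)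
    (f : K → K) :
    dividedDifference (insert i s) v (fun x ↦ (x - v i) * f x) = dividedDifference s v f := by
  rw [dividedDifference, sum_insert hi, sub_self, zero_mul, zero_div, zero_add]
  refine sum_congr rfl fun j hj ↦ ?_
  have hij : i ≠ j := (ne_of_mem_of_not_mem hj hi).symm
  rw [erase_insert_of_ne hij, prod_insert (by simp [hi]),
    mul_div_mul_left _ _ (sub_ne_zero.2 (hv j hj))]

lemma dividedDifference_insert_pow_succ {i : ι} (hi : i ∉ s) (hv : ∀ j ∈ s, v j ≠ v i) (n : ℕ) :
    dividedDifference (insert i s) v (· ^ (n + 1)) =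
      dividedDifference s v (· ^ n) + v i * dividedDifference (insert i s) v (· ^ n) := by
  rw [← dividedDifference_insert_sub_mul hi hv]
  simp only [dividedDifference, mul_sum, ← sum_add_distrib]
  exact sum_congr rfl fun j _ ↦ by ring

lemma completeHomogeneous_succ_eq_dividedDifference (hv : Set.InjOn v s) (k : ℕ) :
    completeHomogeneous s v (k + 1) = dividedDifference s v (· ^ (k + #s)) := by
  induction s using Finset.induction_on generalizing k with
  | empty => simp [completeHomogeneous_empty_succ, dividedDifference]
  | insert i s hi ih =>
    have hvs : Set.InjOn v s := hv.mono (coe_subset.2 (subset_insert i s))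
    have hvi : ∀ j ∈ s, v j ≠ v i := fun j hj h ↦
      hi (hv (mem_insert_of_mem hj) (mem_insert_self i s) h ▸ hj)
    suffices h : ∀ n, completeHomogeneous (insert i s) v n =
        dividedDifference (insert i s) v (· ^ (n + #s)) by
      rw [h, card_insert_of_notMem hi, add_right_comm, add_assoc]
    intro n
    induction n with
    | zero =>
      have hone := dividedDifference_pow_card_sub_one (insert_nonempty i s) hv
      rw [card_insert_of_notMem hi, Nat.add_sub_cancel] at hone
      rw [completeHomogeneous_zero, zero_add, hone]
    | succ n ihn =>
      rw [completeHomogeneous_insert_succ hi, ih hvs, ihn, add_right_comm,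
        dividedDifference_insert_pow_succ hi hvi]

theorem complete_homogeneous_partial_fractions_general (hs : s.Nonempty) (hv : Set.InjOn v s)
    (k : ℕ) :
    ∑ f ∈ piAntidiag s k, ∏ i ∈ s, v i ^ f i =
      ∑ i ∈ s, v i ^ (k + #s - 1) / ∏ j ∈ s.erase i, (v i - v j) := by
  change completeHomogeneous s v k = dividedDifference s v (· ^ (k + #s - 1))
  cases k with
  | zero => rw [completeHomogeneous_zero, zero_add, dividedDifference_pow_card_sub_one hs hv]
  | succ k =>
    rw [completeHomogeneous_succ_eq_dividedDifference hv, add_right_comm, Nat.add_sub_cancel]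

end DividedDifference

/-- Complete homogeneous symmetric polynomial identity:
`∑_{k₁+⋯+k_m=k} a₁^{k₁}⋯a_m^{k_m} = ∑_i a_i^{k+m-1} / ∏_{j≠i} (a_i - a_j)`
for pairwise distinct `a₁, …, a_m`. -/
theorem complete_homogeneous_partial_fractions {K : Type*} [Field K]
    (m : ℕ) (hm : 0 < m) (a : Fin m → K)
    (ha : ∀ i j : Fin m, i ≠ j → a i ≠ a j) :
    ∀ k : ℕ,
      ∑ f ∈ Finset.Nat.antidiagonalTuple m k, ∏ i, a i ^ f i =
        ∑ i, a i ^ (k + m - 1) / ∏ j ∈ Finset.univ.erase i, (a i - a j) := by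
  intro k
  have : Nonempty (Fin m) := ⟨⟨0, hm⟩⟩
  have hinj : Function.Injective a := fun i j h ↦ by_contra fun hij ↦ ha i j hij h
  simpa [piAntidiag_univ_fin_eq_antidiagonalTuple] using
    complete_homogeneous_partial_fractions_general univ_nonempty hinj.injOn k
end
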